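/- Let w be a non-increasing positive function on I=(0,a), 0<a≤∞, with W(t)=∫₀ᵗ w dm finite on I, and let h, k : I → [0,∞) be locally integrable functions such that h/w and k/w are non-increasing on I. Then ∫₀ˣ h dm ≤ ∫₀ˣ k dm for every x∈I if and only if ∫₀ˣ (h/w)^{*,w} dm ≤ ∫₀ˣ (k/w)^{*,w} dm for every x ∈ (0, W(a)), where (·)^{*,w} denotes the decreasing rearrangement with respect to the measure w·dm. -/

import Mathlib

open MeasureTheory Set Filter
open scoped ENNReal

/-- The interval `(0, a)` for `a : ℝ≥0∞` (equals `(0,∞)` when `a = ∞`). -/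
def Iset (a : ℝ≥0∞) : Set ℝ := {x : ℝ | 0 < x ∧ ENNReal.ofReal x < a}

/-- Lebesgue measure restricted to the interval `(0,a)`. -/
noncomputable def volI (a : ℝ≥0∞) : Measure ℝ := volume.restrict (Iset a)

/-- Decreasing rearrangement of an `ℝ≥0∞`-valued function with respect to a measure `μ`:
`f^{*,μ}(t) = inf {s > 0 : μ({f > s}) ≤ t}`. -/
noncomputable def rearrE (μ : Measure ℝ) (f : ℝ → ℝ≥0∞) (t : ℝ) : ℝ≥0∞ :=
  sInf {s : ℝ≥0∞ | 0 < s ∧ μ {x | s < f x} ≤ ENNReal.ofReal t}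

/-- Decreasing rearrangement of a real function with respect to a measure `μ` on `ℝ`:
`f^{*,μ}(t) = inf {s > 0 : μ({|f| > s}) ≤ t}`. -/
noncomputable def rearr (μ : Measure ℝ) (f : ℝ → ℝ) (t : ℝ) : ℝ≥0∞ :=
  rearrE μ (fun x => ENNReal.ofReal |f x|) t

/-- The measure `w·dm` on the set `I`. -/
noncomputable def wMeas (I : Set ℝ) (w : ℝ → ℝ) : Measure ℝ :=
  (volume.restrict I).withDensity (fun t => ENNReal.ofReal (w t))

/-- `W(t) = ∫₀ᵗ w dm`. -/
noncomputable def Wfun (w : ℝ → ℝ) (t : ℝ) : ℝ := ∫ s in Set.Ioo (0:ℝ) t, w s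

/-- `b = ∫_I w dm` as an extended real number. -/
noncomputable def bval (a : ℝ≥0∞) (w : ℝ → ℝ) : ℝ≥0∞ := ∫⁻ x in Iset a, ENNReal.ofReal (w x)

/-!
Two functions with the same distribution have the same integral. If every superlevel set of `f`
either contains `A` or is contained in `A`, then `μ (A ∩ {f > s}) = min (μ A) (μ {f > s})`, which is
also the length of `{t ∈ (0, μ A) | f^{*,μ}(t) > s}`; so `f` on `A` and `f^{*,μ}` on `(0, μ A)` are
identically distributed. For `f = h / w` non-increasing, `μ = w·dm` and `A = (0, x)` this gives
`∫₀^{W(x)} (h/w)^{*,w} dm = ∫₀ˣ (h/w) w dm = ∫₀ˣ h dm`, and `W` maps `I` onto `(0, W(a))`.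
-/

section Measure

variable {α : Type*} {_ : MeasurableSpace α} {μ : Measure α} {s t : Set α}

lemma measure_inter_eq_min (h : s ≤ᵐ[μ] t ∨ t ≤ᵐ[μ] s) :
    μ (s ∩ t) = min (μ s) (μ t) := by
  refine le_antisymm (le_min (measure_mono inter_subset_left) (measure_mono inter_subset_right)) ?_
  rcases h with h | h
  · exact (min_le_left _ _).trans (measure_mono_ae (h.mono fun _ hst hs => ⟨hs, hst hs⟩))
  · exact (min_le_right _ _).trans (measure_mono_ae (h.mono fun _ hts ht => ⟨hts ht, ht⟩))

lemma measure_lt_eq_iSup (μ : Measure α) (f : α → ℝ≥0∞) (s : ℝ≥0∞) :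
    μ {x | s < f x} = ⨆ r : Ioi s, μ {x | r < f x} := by
  have hanti : Antitone fun r : Ioi s => {x | (r : ℝ≥0∞) < f x} :=
    fun _ _ hqr _ hx => lt_of_le_of_lt (Subtype.coe_le_coe.2 hqr) hx
  rw [← hanti.measure_iUnion]
  congr 1
  ext x
  simp only [mem_ofPred_eq, mem_iUnion, Subtype.exists, mem_Ioi, exists_prop]
  exact ⟨exists_between, fun ⟨_, hsr, hrx⟩ => hsr.trans hrx⟩

lemma integrableOn_of_lintegral_ofReal_ne_top {f : α → ℝ} (hs : MeasurableSet s)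
    (hf : AEStronglyMeasurable f (μ.restrict s)) (hf0 : ∀ x ∈ s, 0 ≤ f x)
    (hfin : ∫⁻ x in s, ENNReal.ofReal (f x) ∂μ ≠ ∞) :
    IntegrableOn f s μ :=
  (lintegral_ofReal_ne_top_iff_integrable hf ((ae_restrict_mem hs).mono hf0)).1 hfin

end Measure

section Iset

variable {a : ℝ≥0∞} {x : ℝ}

lemma Iset_ofReal (x : ℝ) : Iset (ENNReal.ofReal x) = Ioo 0 x := by
  ext t
  simp only [Iset, mem_ofPred_eq, mem_Ioo, ENNReal.ofReal_lt_ofReal_iff']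
  exact ⟨fun h => ⟨h.1, h.2.1⟩, fun h => ⟨h.1, h.2, h.1.trans h.2⟩⟩

lemma Iset_min (a b : ℝ≥0∞) : Iset (min a b) = Iset a ∩ Iset b := by
  ext t
  simp only [Iset, mem_ofPred_eq, mem_inter_iff, lt_min_iff]
  tauto

lemma isOpen_Iset (a : ℝ≥0∞) : IsOpen (Iset a) :=
  isOpen_Ioi.inter (isOpen_Iio.preimage ENNReal.continuous_ofReal)

lemma measurableSet_Iset (a : ℝ≥0∞) : MeasurableSet (Iset a) :=
  (isOpen_Iset a).measurableSet

lemma volume_Iset (a : ℝ≥0∞) : volume (Iset a) = a := by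
  cases a with
  | top =>
    have hset : Iset ∞ = Ioi 0 := by
      ext t
      simp only [Iset, mem_ofPred_eq, ENNReal.ofReal_lt_top, and_true, mem_Ioi]
    rw [hset, Real.volume_Ioi]
  | coe r => rw [← ENNReal.ofReal_coe_nnreal, Iset_ofReal, Real.volume_Ioo, sub_zero]

lemma Ioc_subset_Iset (hx : x ∈ Iset a) : Ioc 0 x ⊆ Iset a :=
  fun _ ht => ⟨ht.1, (ENNReal.ofReal_le_ofReal ht.2).trans_lt hx.2⟩

lemma Ioo_subset_Iset (hx : x ∈ Iset a) : Ioo 0 x ⊆ Iset a :=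
  Ioo_subset_Ioc_self.trans (Ioc_subset_Iset hx)

lemma Iio_inter_Iset (hx : x ∈ Iset a) : Iio x ∩ Iset a = Ioo 0 x :=
  Subset.antisymm (fun _ ht => ⟨ht.2.1, ht.1⟩) fun _ ht => ⟨ht.2, Ioo_subset_Iset hx ht⟩

lemma exists_mem_Iset_gt (hx : x ∈ Iset a) : ∃ y ∈ Iset a, x < y := by
  obtain ⟨y, -, hxy, hya⟩ := ENNReal.lt_iff_exists_real_btwn.1 hx.2
  have hlt : x < y := (ENNReal.ofReal_lt_ofReal_iff_of_nonneg hx.1.le).1 hxy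
  exact ⟨y, ⟨hx.1.trans hlt, hya⟩, hlt⟩

instance ordConnected_Iset (a : ℝ≥0∞) : OrdConnected (Iset a) :=
  ⟨fun _ hx _ hy _ ht => Ioc_subset_Iset hy ⟨hx.1.trans_le ht.1, ht.2⟩⟩

lemma Iset_eq_iUnion_Ioo (a : ℝ≥0∞) : Iset a = ⋃ x : Iset a, Ioo 0 (x : ℝ) := by
  refine Subset.antisymm (fun x hx => ?_) (iUnion_subset fun x => Ioo_subset_Iset x.2)
  obtain ⟨y, hy, hxy⟩ := exists_mem_Iset_gt hx
  exact mem_iUnion.2 ⟨⟨y, hy⟩, hx.1, hxy⟩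

end Iset

section Rearrangement

open ProbabilityTheory

variable {μ : Measure ℝ} {f : ℝ → ℝ≥0∞} {A I : Set ℝ}

lemma lt_rearrE_iff {s : ℝ≥0∞} {t : ℝ} :
    s < rearrE μ f t ↔ ENNReal.ofReal t < μ {x | s < f x} := by
  rw [measure_lt_eq_iSup, lt_iSup_iff]
  constructor
  · intro hs
    obtain ⟨r, hsr, hr⟩ := exists_between hs
    refine ⟨⟨r, hsr⟩, ?_⟩
    by_contra! hle
    exact hr.not_ge (sInf_le ⟨pos_of_gt hsr, hle⟩)
  · rintro ⟨⟨r, hsr⟩, hr⟩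
    refine lt_of_lt_of_le hsr (le_sInf fun q ⟨_, hq⟩ => ?_)
    by_contra! hqr
    exact hr.not_ge ((measure_mono fun _ hx => hqr.trans hx).trans hq)

lemma antitone_rearrE (μ : Measure ℝ) (f : ℝ → ℝ≥0∞) : Antitone (rearrE μ f) :=
  fun _ _ hst => sInf_le_sInf fun _ hr => ⟨hr.1, hr.2.trans (ENNReal.ofReal_le_ofReal hst)⟩

lemma volume_lt_rearrE_inter_Iset (μ : Measure ℝ) (f : ℝ → ℝ≥0∞) (s b : ℝ≥0∞) :
    volume ({t | s < rearrE μ f t} ∩ Iset b) = min (μ {x | s < f x}) b := by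
  have hset : {t | s < rearrE μ f t} ∩ Iset b = Iset (min (μ {x | s < f x}) b) := by
    rw [Iset_min]
    ext t
    simp only [Iset, mem_inter_iff, mem_ofPred_eq, lt_rearrE_iff]
    tauto
  rw [hset, volume_Iset]

theorem identDistrib_rearrE (hf : AEMeasurable f (μ.restrict A)) (hA : μ A ≠ ∞)
    (hnested : ∀ s, A ≤ᵐ[μ] {x | s < f x} ∨ {x | s < f x} ≤ᵐ[μ] A) :
    IdentDistrib f (rearrE μ f) (μ.restrict A) (volume.restrict (Iset (μ A))) where
  aemeasurable_fst := hf
  aemeasurable_snd := (antitone_rearrE μ f).measurable.aemeasurable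
  map_eq := by
    have hmeas := (antitone_rearrE μ f).measurable
    have : IsFiniteMeasure (μ.restrict A) := isFiniteMeasure_restrict.2 hA
    refine ext_of_generate_finite (range Ioi)
      (BorelSpace.measurable_eq.trans (borel_eq_generateFrom_Ioi _)) isPiSystem_Ioi ?_ ?_
    · rintro _ ⟨s, rfl⟩
      rw [Measure.map_apply_of_aemeasurable hf measurableSet_Ioi,
        Measure.map_apply hmeas measurableSet_Ioi, Measure.restrict_apply (hmeas measurableSet_Ioi),
        Measure.restrict_apply₀ (hf.nullMeasurable measurableSet_Ioi)]
      exact (measure_inter_eq_min (hnested s).symm).trans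
        (volume_lt_rearrE_inter_Iset μ f s (μ A)).symm
    · rw [Measure.map_apply_of_aemeasurable hf .univ, Measure.map_apply hmeas .univ]
      simp [volume_Iset]

theorem setLIntegral_rearrE_of_antitoneOn (hI : MeasurableSet I) (hμI : ∀ᵐ x ∂μ, x ∈ I)
    (hf : AntitoneOn f I) {x : ℝ} (hx : x ∈ I) (hμx : μ (Iio x) ≠ ∞) :
    ∫⁻ t in Iset (μ (Iio x)), rearrE μ f t = ∫⁻ y in Iio x, f y ∂μ := by
  have hmeas : AEMeasurable f μ := by
    simpa only [Measure.restrict_eq_self_of_ae_mem hμI] using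
      aemeasurable_restrict_of_antitoneOn (μ := μ) hI hf
  refine (identDistrib_rearrE hmeas.restrict hμx fun s => ?_).lintegral_eq.symm
  rcases lt_or_ge s (f x) with hs | hs
  · left
    filter_upwards [hμI] with y hy hyx
    exact hs.trans_le (hf hy hx (le_of_lt hyx))
  · right
    filter_upwards [hμI] with y hy hsy
    by_contra hxy
    exact hs.not_gt (lt_of_lt_of_le hsy (hf hx hy (not_lt.1 hxy)))

end Rearrangement

section Weight

variable {a : ℝ≥0∞} {w : ℝ → ℝ} {x y : ℝ}

lemma Wfun_eq_intervalIntegral (w : ℝ → ℝ) (hx : 0 ≤ x) : Wfun w x = ∫ s in (0 : ℝ)..x, w s := by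
  rw [intervalIntegral.integral_of_le hx, integral_Ioc_eq_integral_Ioo, Wfun]

lemma Wfun_lt_Wfun (hx : 0 ≤ x) (hxy : x < y) (hw : IntegrableOn w (Ioo 0 y))
    (hpos : ∀ s ∈ Ioo x y, 0 < w s) : Wfun w x < Wfun w y := by
  have hint : IntervalIntegrable w volume 0 y :=
    (intervalIntegrable_iff_integrableOn_Ioo_of_le (hx.trans hxy.le)).2 hw
  have hint_left : IntervalIntegrable w volume 0 x := hint.mono_set (by
    rw [uIcc_of_le hx, uIcc_of_le (hx.trans hxy.le)]; exact Icc_subset_Icc_right hxy.le)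
  rw [Wfun_eq_intervalIntegral w hx, Wfun_eq_intervalIntegral w (hx.trans hxy.le), ← sub_pos,
    intervalIntegral.integral_interval_sub_left hint hint_left]
  exact intervalIntegral.intervalIntegral_pos_of_pos_on (hint_left.symm.trans hint) hpos hxy

lemma continuousOn_Wfun (hw : IntegrableOn w (Ioo 0 x)) : ContinuousOn (Wfun w) (Icc 0 x) := by
  have hw' : IntegrableOn w (Icc 0 x) := by rwa [integrableOn_Icc_iff_integrableOn_Ioo]
  exact (intervalIntegral.continuousOn_primitive hw').congr
    fun _ _ => integral_Ioc_eq_integral_Ioo.symm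

lemma ofReal_Wfun (hw : IntegrableOn w (Ioo 0 x)) (hw0 : ∀ s ∈ Ioo 0 x, 0 ≤ w s) :
    ENNReal.ofReal (Wfun w x) = ∫⁻ s in Ioo 0 x, ENNReal.ofReal (w s) :=
  ofReal_integral_eq_lintegral_ofReal hw ((ae_restrict_mem measurableSet_Ioo).mono hw0)

lemma bval_eq_iSup (a : ℝ≥0∞) (w : ℝ → ℝ) :
    bval a w = ⨆ x : Iset a, ∫⁻ s in Ioo 0 (x : ℝ), ENNReal.ofReal (w s) := by
  have hmono : Monotone fun x : Iset a => Ioo 0 (x : ℝ) := fun _ _ hxy => Ioo_subset_Ioo_right hxy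
  simp only [bval, ← withDensity_apply' (μ := volume)]
  rw [← hmono.measure_iUnion, ← Iset_eq_iUnion_Ioo]

theorem image_Wfun_Iset (hw : ∀ x ∈ Iset a, IntegrableOn w (Ioo 0 x))
    (hpos : ∀ x ∈ Iset a, 0 < w x) : Wfun w '' Iset a = Iset (bval a w) := by
  have hpos_Ioo : ∀ x ∈ Iset a, ∀ s ∈ Ioo 0 x, 0 < w s :=
    fun x hx s hs => hpos s (Ioo_subset_Iset hx hs)
  have hzero : Wfun w 0 = 0 := by simp [Wfun]
  have hbval : bval a w = ⨆ x : Iset a, ENNReal.ofReal (Wfun w x) := by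
    rw [bval_eq_iSup]
    exact iSup_congr fun ⟨x, hx⟩ =>
      (ofReal_Wfun (hw x hx) fun s hs => (hpos_Ioo x hx s hs).le).symm
  apply Subset.antisymm
  · rintro _ ⟨x, hx, rfl⟩
    obtain ⟨y, hy, hxy⟩ := exists_mem_Iset_gt hx
    have hWx : 0 < Wfun w x := by
      simpa only [hzero] using Wfun_lt_Wfun le_rfl hx.1 (hw x hx) (hpos_Ioo x hx)
    have hWxy : Wfun w x < Wfun w y := Wfun_lt_Wfun hx.1.le hxy (hw y hy)
      fun s hs => hpos_Ioo y hy s ⟨hx.1.trans hs.1, hs.2⟩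
    refine ⟨hWx, ((ENNReal.ofReal_lt_ofReal_iff_of_nonneg hWx.le).2 hWxy).trans_le ?_⟩
    rw [hbval]
    exact le_iSup (fun x : Iset a => ENNReal.ofReal (Wfun w x)) ⟨y, hy⟩
  · rintro t ⟨ht, htb⟩
    rw [hbval, lt_iSup_iff] at htb
    obtain ⟨⟨y, hy⟩, hty⟩ := htb
    have hty' : t < Wfun w y := (ENNReal.ofReal_lt_ofReal_iff_of_nonneg ht.le).1 hty
    obtain ⟨x, hx, rfl⟩ := intermediate_value_Ioo hy.1.le (continuousOn_Wfun (hw y hy))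
      ⟨hzero.symm ▸ ht, hty'⟩
    exact ⟨x, Ioo_subset_Iset hy hx, rfl⟩

lemma wMeas_Iio (hx : x ∈ Iset a) :
    wMeas (Iset a) w (Iio x) = ∫⁻ s in Ioo 0 x, ENNReal.ofReal (w s) := by
  rw [wMeas, withDensity_apply', Measure.restrict_restrict measurableSet_Iio, Iio_inter_Iset hx]

lemma ae_wMeas_mem {I : Set ℝ} (hI : MeasurableSet I) (w : ℝ → ℝ) : ∀ᵐ x ∂wMeas I w, x ∈ I :=
  (withDensity_absolutelyContinuous _ _).ae_le (ae_restrict_mem hI)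

lemma setLIntegral_Iio_wMeas (hx : x ∈ Iset a) (hw : AEMeasurable w (volume.restrict (Ioo 0 x)))
    (f : ℝ → ℝ≥0∞) :
    ∫⁻ s in Iio x, f s ∂wMeas (Iset a) w = ∫⁻ s in Ioo 0 x, ENNReal.ofReal (w s) * f s := by
  have hrestrict : (volume.restrict (Iset a)).restrict (Iio x) = volume.restrict (Ioo 0 x) := by
    rw [Measure.restrict_restrict measurableSet_Iio, Iio_inter_Iset hx]
  rw [wMeas, setLIntegral_withDensity_eq_setLIntegral_mul_non_measurable₀ _
    (by rw [hrestrict]; exact hw.ennreal_ofReal) _ measurableSet_Iio (by simp), hrestrict]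
  rfl

theorem setLIntegral_rearr_div {h : ℝ → ℝ} (hx : x ∈ Iset a) (hw : IntegrableOn w (Ioo 0 x))
    (hpos : ∀ s ∈ Iset a, 0 < w s) (hh : ∀ s ∈ Iset a, 0 ≤ h s)
    (hanti : AntitoneOn (fun s => h s / w s) (Iset a)) :
    ∫⁻ t in Ioo 0 (Wfun w x), rearr (wMeas (Iset a) w) (fun s => h s / w s) t
      = ∫⁻ t in Ioo 0 x, ENNReal.ofReal (h t) := by
  have habs : ∀ s ∈ Iset a, |h s / w s| = h s / w s :=
    fun s hs => abs_of_nonneg (div_nonneg (hh s hs) (hpos s hs).le)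
  have hanti_abs : AntitoneOn (fun s => ENNReal.ofReal |h s / w s|) (Iset a) := by
    intro s hs t ht hst
    simp only [habs s hs, habs t ht]
    exact ENNReal.ofReal_le_ofReal (hanti hs ht hst)
  have hW : wMeas (Iset a) w (Iio x) = ENNReal.ofReal (Wfun w x) := by
    rw [wMeas_Iio hx, ofReal_Wfun hw fun s hs => (hpos s (Ioo_subset_Iset hx hs)).le]
  calc ∫⁻ t in Ioo 0 (Wfun w x), rearr (wMeas (Iset a) w) (fun s => h s / w s) t
    _ = ∫⁻ s in Iio x, ENNReal.ofReal |h s / w s| ∂wMeas (Iset a) w := by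
      rw [← Iset_ofReal, ← hW]
      exact setLIntegral_rearrE_of_antitoneOn (measurableSet_Iset a)
        (ae_wMeas_mem (measurableSet_Iset a) w) hanti_abs hx (hW ▸ ENNReal.ofReal_ne_top)
    _ = ∫⁻ s in Ioo 0 x, ENNReal.ofReal (w s) * ENNReal.ofReal |h s / w s| :=
      setLIntegral_Iio_wMeas hx hw.aemeasurable _
    _ = ∫⁻ s in Ioo 0 x, ENNReal.ofReal (h s) := by
      refine setLIntegral_congr_fun measurableSet_Ioo fun s hs => ?_
      have hsI := Ioo_subset_Iset hx hs
      have hws := hpos s hsI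
      rw [habs s hsI, ← ENNReal.ofReal_mul hws.le, mul_div_cancel₀ _ hws.ne']

end Weight

theorem stmt_11_general {a : ℝ≥0∞} {w h k : ℝ → ℝ}
    (hw_pos : ∀ x ∈ Iset a, 0 < w x) (hw_int : ∀ x ∈ Iset a, IntegrableOn w (Ioo 0 x))
    (hh0 : ∀ x ∈ Iset a, 0 ≤ h x) (hk0 : ∀ x ∈ Iset a, 0 ≤ k x)
    (hh_anti : AntitoneOn (fun t => h t / w t) (Iset a))
    (hk_anti : AntitoneOn (fun t => k t / w t) (Iset a)) :
    (∀ x ∈ Iset a,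
        ∫⁻ t in Ioo 0 x, ENNReal.ofReal (h t) ≤ ∫⁻ t in Ioo 0 x, ENNReal.ofReal (k t))
      ↔ (∀ x : ℝ, 0 < x → ENNReal.ofReal x < bval a w →
          ∫⁻ t in Ioo 0 x, rearr (wMeas (Iset a) w) (fun s => h s / w s) t
            ≤ ∫⁻ t in Ioo 0 x, rearr (wMeas (Iset a) w) (fun s => k s / w s) t) := by
  simp only [← and_imp]
  change _ ↔ ∀ y ∈ Iset (bval a w), _
  rw [← image_Wfun_Iset hw_int hw_pos, forall_mem_image]
  refine forall₂_congr fun x hx => ?_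
  rw [setLIntegral_rearr_div hx (hw_int x hx) hw_pos hh0 hh_anti,
    setLIntegral_rearr_div hx (hw_int x hx) hw_pos hk0 hk_anti]

/-- For locally integrable `h, k ≥ 0` on `I` with `h/w`, `k/w` non-increasing,
`∫₀ˣ h ≤ ∫₀ˣ k` for all `x ∈ I` iff `∫₀ˣ (h/w)^{*,w} ≤ ∫₀ˣ (k/w)^{*,w}` for all
`x ∈ (0, W(a))`. -/
theorem stmt_11 (a : ℝ≥0∞) (ha : 0 < a) (w h k : ℝ → ℝ)
    (hw_pos : ∀ x ∈ Iset a, 0 < w x) (hw_anti : AntitoneOn w (Iset a)) (hw_meas : Measurable w)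
    (hW_fin : ∀ t ∈ Iset a, ∫⁻ s in Set.Ioo 0 t, ENNReal.ofReal (w s) ≠ ∞)
    (hh_meas : Measurable h) (hk_meas : Measurable k)
    (hh0 : ∀ x ∈ Iset a, 0 ≤ h x) (hk0 : ∀ x ∈ Iset a, 0 ≤ k x)
    (hh_loc : ∀ x ∈ Iset a, ∫⁻ t in Set.Ioo 0 x, ENNReal.ofReal (h t) ≠ ∞)
    (hk_loc : ∀ x ∈ Iset a, ∫⁻ t in Set.Ioo 0 x, ENNReal.ofReal (k t) ≠ ∞)
    (hh_anti : AntitoneOn (fun t => h t / w t) (Iset a))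
    (hk_anti : AntitoneOn (fun t => k t / w t) (Iset a)) :
    (∀ x ∈ Iset a,
        ∫⁻ t in Set.Ioo 0 x, ENNReal.ofReal (h t) ≤ ∫⁻ t in Set.Ioo 0 x, ENNReal.ofReal (k t))
      ↔ (∀ x : ℝ, 0 < x → ENNReal.ofReal x < bval a w →
          ∫⁻ t in Set.Ioo 0 x, rearr (wMeas (Iset a) w) (fun s => h s / w s) t
            ≤ ∫⁻ t in Set.Ioo 0 x, rearr (wMeas (Iset a) w) (fun s => k s / w s) t) := by
  have hw_int : ∀ x ∈ Iset a, IntegrableOn w (Ioo 0 x) := fun x hx =>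
    integrableOn_of_lintegral_ofReal_ne_top measurableSet_Ioo hw_meas.aestronglyMeasurable
      (fun s hs => (hw_pos s (Ioo_subset_Iset hx hs)).le) (hW_fin x hx)
  exact stmt_11_general hw_pos hw_int hh0 hk0 hh_anti hk_anti
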